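/- Let u be the normalized Airy function, 0 < δ'₁ < δ'₂ < ... the increasing enumeration of the zeros of h ↦ u'(-h) on (0,∞), pₖ := (u'(0)²/2)·(δ'ₖ)^{-4}, and f_{2/3} the Mittag-Leffler density of index 2/3. Define ν₁(x) := ∑_{k=1}^∞ pₖ·(δ'ₖ/2)·f_{2/3}(δ'ₖ·|x|) and ν̂₁(x) := ∑_{k=1}^∞ pₖ·(δ'ₖ/2)·e^{-δ'ₖ·|x|} for x ∈ ℝ. Then both series converge for every x ∈ ℝ and for every x ∈ ℝ: ∫₀^∞ e^{-t}·t^{-2/3}·ν₁(t^{-2/3}·x) dt = ν̂₁(x). (ν₁ is the density of the position X(1) of the true self-repelling motion at time 1 and ν̂₁ the density of the position at an independent exponential time.) -/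

import Mathlib

open Real MeasureTheory Set Filter Topology

noncomputable section

/-- The Mittag-Leffler density of index `2/3`, defined by its entire power series. -/
def mittagLeffler23 (x : ℝ) : ℝ :=
  (1 / π) * ∑' k : ℕ,
    (Real.sin (2 * π * ((k : ℝ) + 1) / 3) * Real.Gamma (2 * ((k : ℝ) + 1) / 3) /
      (Nat.factorial k : ℝ)) * (-x) ^ k

/-!
By Hankel's contour integral for `1 / Γ` and the reflection formula, the Mittag-Leffler density is
`f x = (1 / π) * Im ∫ s ^ α * exp (s - x * s ^ α) ds / s` along the upper ray of a Hankel contour.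
Rescaling `s` by `t`, the function `t ^ (-α) * f (t ^ (-α) * x)` has the same representation with
`exp s` replaced by `exp (t * s)`, so integrating it against `exp (-t)` turns that factor into
`1 / (1 - s)`. The only obstruction to moving the ray to the positive axis, where the integrand is
real, is the pole at `s = 1`. Subtracting `exp (-x)` times the integrand for `x = 0` removes it, and
hence the transform at `x` is `exp (-x)` times the transform at `0`, which is `1` by the reflection
formula.

Between two consecutive critical points of a solution of the Airy equation the solution vanishes,
and it needs a distance of order `δ ^ (-1 / 2)` to get from a critical point to a zero. Therefore
`δ k` grows at least like `k ^ (2 / 3)`, the weights `p k * δ k / 2` are summable, and the Laplace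
transform can be taken termwise because `f` is bounded on `[0, ∞)`.
-/

/-! ### Contour integrals in the logarithmic coordinate -/

theorem integral_exp_smul_comp_exp {E : Type*} [NormedAddCommGroup E] [NormedSpace ℝ E]
    (g : ℝ → E) : ∫ v, Real.exp v • g (Real.exp v) = ∫ r in Ioi (0 : ℝ), g r := by
  rw [← Real.range_exp, ← image_univ, integral_image_eq_integral_abs_deriv_smul MeasurableSet.univ
    (fun v _ => (Real.hasDerivAt_exp v).hasDerivWithinAt) Real.exp_injective.injOn]
  simp only [abs_of_pos (Real.exp_pos _), Measure.restrict_univ]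

theorem integrable_exp_smul_comp_exp_iff {E : Type*} [NormedAddCommGroup E] [NormedSpace ℝ E]
    {g : ℝ → E} :
    Integrable (fun v => Real.exp v • g (Real.exp v)) ↔ IntegrableOn g (Ioi (0 : ℝ)) := by
  rw [← Real.range_exp, ← image_univ, integrableOn_image_iff_integrableOn_abs_deriv_smul
    MeasurableSet.univ (fun v _ => (Real.hasDerivAt_exp v).hasDerivWithinAt)
    Real.exp_injective.injOn]
  simp only [abs_of_pos (Real.exp_pos _), integrableOn_univ]

theorem exp_mul_mul_exp_neg_mul_exp (β c v : ℝ) :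
    Real.exp (β * v) * Real.exp (-(c * Real.exp v)) =
      Real.exp v • (Real.exp v ^ (β - 1) * Real.exp (-(c * Real.exp v))) := by
  have hpow : Real.exp (β * v) = Real.exp v * Real.exp v ^ (β - 1) := by
    rw [← Real.exp_mul, ← Real.exp_add]
    ring_nf
  rw [hpow, smul_eq_mul, mul_assoc]

theorem integrable_exp_mul_mul_exp_neg_mul_exp {β c : ℝ} (hβ : 0 < β) (hc : 0 < c) :
    Integrable fun v => Real.exp (β * v) * Real.exp (-(c * Real.exp v)) := by
  simp_rw [exp_mul_mul_exp_neg_mul_exp β c]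
  rw [integrable_exp_smul_comp_exp_iff (g := fun r => r ^ (β - 1) * Real.exp (-(c * r)))]
  simpa using integrableOn_rpow_mul_exp_neg_mul_rpow (by linarith : -1 < β - 1) one_pos hc

theorem integral_exp_mul_mul_exp_neg_mul_exp {β c : ℝ} (hβ : 0 < β) (hc : 0 < c) :
    ∫ v, Real.exp (β * v) * Real.exp (-(c * Real.exp v)) = (1 / c) ^ β * Real.Gamma β := by
  simp_rw [exp_mul_mul_exp_neg_mul_exp β c]
  rw [integral_exp_smul_comp_exp fun r => r ^ (β - 1) * Real.exp (-(c * r)),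
    Real.integral_rpow_mul_exp_neg_mul_Ioi hβ hc]

theorem tendsto_intervalIntegral_integral_add_mul_I {f : ℂ → ℂ} {B : ℝ → ℝ} {θ : ℝ}
    (hf : DifferentiableOn ℂ f {ζ | ζ.im ∈ uIcc 0 θ})
    (hB : ∀ᶠ v : ℝ in cocompact ℝ, ∀ y ∈ uIcc 0 θ, ‖f (v + y * Complex.I)‖ ≤ B v)
    (hB_lim : Tendsto B (cocompact ℝ) (𝓝 0))
    (hint : Integrable fun v : ℝ => f (v + θ * Complex.I)) :
    Tendsto (fun R : ℝ => ∫ v in (-R)..R, f v) atTop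
      (𝓝 (∫ v : ℝ, f (v + θ * Complex.I))) := by
  set V : ℝ → ℂ := fun v => Complex.I • ∫ y in (0 : ℝ)..θ, f (v + y * Complex.I)
  have hV : Tendsto V (cocompact ℝ) (𝓝 0) := by
    refine squeeze_zero_norm' (hB.mono fun v hv => ?_)
      (show Tendsto (fun v => B v * |θ - 0|) (cocompact ℝ) (𝓝 0) by
        simpa using hB_lim.mul_const |θ - 0|)
    rw [norm_smul, Complex.norm_I, one_mul]
    exact intervalIntegral.norm_integral_le_of_norm_le_const fun y hy =>
      hv y (uIoc_subset_uIcc hy)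
  rw [cocompact_eq_atBot_atTop, tendsto_sup] at hV
  have hrect : ∀ R : ℝ, ∫ v in (-R)..R, f v =
      (∫ v in (-R)..R, f (v + θ * Complex.I)) - V R + V (-R) := by
    intro R
    have h := Complex.integral_boundary_rect_eq_zero_of_differentiableOn f (-R : ℝ)
      (R + θ * Complex.I) (hf.mono fun ζ hζ => by simpa using hζ.2)
    simp only [Complex.ofReal_re, Complex.ofReal_im, Complex.add_re, Complex.add_im,
      Complex.mul_I_re, Complex.mul_I_im, Complex.ofReal_zero, neg_zero, add_zero, zero_add,
      zero_mul] at h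
    linear_combination h
  simp_rw [hrect]
  simpa using ((intervalIntegral_tendsto_integral hint tendsto_neg_atTop_atBot tendsto_id).sub
    hV.2).add (hV.1.comp tendsto_neg_atTop_atBot)

theorem re_cexp_mul_add_mul_I (b v y : ℝ) :
    (Complex.exp (b * (v + y * Complex.I))).re = Real.exp (b * v) * Real.cos (b * y) := by
  rw [Complex.exp_re]
  simp

theorem norm_cexp_mul_add_mul_I (b v y : ℝ) :
    ‖Complex.exp (b * (v + y * Complex.I))‖ = Real.exp (b * v) := by
  rw [Complex.norm_exp]
  simp

theorem tendsto_cocompact_exp_mul_mul_exp_neg_mul_exp {β c : ℝ} (hβ : 0 < β) (hc : 0 < c) :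
    Tendsto (fun v => Real.exp (β * v) * Real.exp (-(c * Real.exp v))) (cocompact ℝ) (𝓝 0) := by
  rw [cocompact_eq_atBot_atTop, tendsto_sup]
  constructor
  · refine squeeze_zero (fun v => by positivity)
      (fun v => mul_le_of_le_one_right (Real.exp_pos _).le (Real.exp_le_one_iff.2 ?_))
      (Real.tendsto_exp_atBot.comp (tendsto_id.const_mul_atBot hβ))
    exact neg_nonpos.2 (by positivity)
  · refine ((tendsto_rpow_mul_exp_neg_mul_atTop_nhds_zero β c hc).comp
      Real.tendsto_exp_atTop).congr fun v => ?_
    simp only [Function.comp_apply, ← Real.exp_mul, neg_mul, mul_comm v]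

theorem integral_cexp_mul_mul_cexp_neg_cexp {β φ : ℝ} (hβ : 0 < β) (hφ : |φ| < π / 2) :
    ∫ v : ℝ, Complex.exp (β * (v + φ * Complex.I)) *
      Complex.exp (-Complex.exp (v + φ * Complex.I)) = Real.Gamma β := by
  set f : ℂ → ℂ := fun ζ => Complex.exp (β * ζ) * Complex.exp (-Complex.exp ζ)
  set c := Real.cos φ
  have hc : 0 < c := Real.cos_pos_of_mem_Ioo (abs_lt.1 hφ)
  have hf_bound : ∀ v : ℝ, ∀ y ∈ uIcc 0 φ, ‖f (v + y * Complex.I)‖ ≤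
      Real.exp (β * v) * Real.exp (-(c * Real.exp v)) := by
    intro v y hy
    have hcos : c ≤ Real.cos y := by
      rw [← Real.cos_abs y, show c = Real.cos |φ| from (Real.cos_abs φ).symm]
      exact Real.cos_le_cos_of_nonneg_of_le_pi (abs_nonneg y) (by linarith [Real.pi_pos])
        (by simpa using abs_sub_left_of_mem_uIcc hy)
    have hre := re_cexp_mul_add_mul_I 1 v y
    simp only [Complex.ofReal_one, one_mul] at hre
    rw [norm_mul, norm_cexp_mul_add_mul_I, Complex.norm_exp, Complex.neg_re, hre, mul_comm c]
    gcongr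
  have hint : Integrable fun v : ℝ => f (v + φ * Complex.I) :=
    (integrable_exp_mul_mul_exp_neg_mul_exp hβ hc).mono' (by fun_prop)
      (.of_forall fun v => hf_bound v φ right_mem_uIcc)
  have hreal : ∀ v : ℝ, f v = ((Real.exp (β * v) * Real.exp (-(1 * Real.exp v)) : ℝ) : ℂ) := by
    intro v
    push_cast
    rw [one_mul]
  have hint_real := (integrable_exp_mul_mul_exp_neg_mul_exp hβ one_pos).ofReal (𝕜 := ℂ)
  have hlim_real := intervalIntegral_tendsto_integral hint_real tendsto_neg_atTop_atBot tendsto_id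
  have hlim := tendsto_intervalIntegral_integral_add_mul_I (f := f) (by fun_prop)
    (.of_forall hf_bound) (tendsto_cocompact_exp_mul_mul_exp_neg_mul_exp hβ hc) hint
  simp_rw [hreal] at hlim
  rw [tendsto_nhds_unique hlim hlim_real, integral_ofReal,
    integral_exp_mul_mul_exp_neg_mul_exp hβ one_pos, one_div_one, Real.one_rpow, one_mul]
  rfl

theorem integral_cexp_mul_mul_cexp_cexp {β θ : ℝ} (hβ : 0 < β) (hθ : |θ - π| < π / 2) :
    ∫ v : ℝ, Complex.exp (β * (v + θ * Complex.I)) *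
      Complex.exp (Complex.exp (v + θ * Complex.I)) =
      Complex.exp ((π * β : ℝ) * Complex.I) * Real.Gamma β := by
  rw [← integral_cexp_mul_mul_cexp_neg_cexp hβ hθ, ← integral_const_mul]
  congr 1 with v
  have hexp : Complex.exp (v + θ * Complex.I) =
      -Complex.exp (v + (θ - π : ℝ) * Complex.I) := by
    rw [← mul_neg_one, ← Complex.exp_pi_mul_I, ← Complex.exp_add]
    congr 1
    push_cast
    ring
  have hpow : Complex.exp (β * (v + θ * Complex.I)) = Complex.exp ((π * β : ℝ) * Complex.I) *
      Complex.exp (β * (v + (θ - π : ℝ) * Complex.I)) := by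
    rw [← Complex.exp_add]
    congr 1
    push_cast
    ring
  rw [hexp, hpow, mul_assoc]

/-! ### The Hankel representation of the Mittag-Leffler density -/

/-- The `M`-Wright function, that is, the Mittag-Leffler density of index `α` on `[0, ∞)`, in the
power series form that is also used for `mittagLeffler23`. -/
def mittagLefflerDensity (α x : ℝ) : ℝ :=
  (1 / π) * ∑' k : ℕ,
    (Real.sin (π * (α * (k + 1))) * Real.Gamma (α * (k + 1)) / k.factorial) * (-x) ^ k

theorem mittagLeffler23_eq_mittagLefflerDensity (x : ℝ) :
    mittagLeffler23 x = mittagLefflerDensity (2 / 3) x := by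
  unfold mittagLeffler23 mittagLefflerDensity
  congr! 7 <;> ring

/-- The argument `θ` of the upper ray of the Hankel contour, chosen so that both `exp s` and
`exp (-s ^ α)` decay along the ray: `α θ = π - θ`, hence `cos θ = -cos (α θ) < 0`. -/
def contourAngle (α : ℝ) : ℝ := π / (1 + α)

/-- The decay rate `-cos θ = cos (α θ)` of `exp s` along the ray of argument `θ = contourAngle α`.
-/
def contourDecay (α : ℝ) : ℝ := Real.cos (α * contourAngle α)

/-- The upper half of the Hankel contour in the logarithmic coordinate `ζ = log s`. The lower half
is its complex conjugate, so contour integrals are `2 * I` times the imaginary part of integrals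
over this half. -/
def hankelContour (α v : ℝ) : ℂ := v + contourAngle α * Complex.I

/-- The function `s ^ α * exp (-x * s ^ α)` in the logarithmic coordinate `ζ = log s`. -/
def hankelKernel (α x : ℝ) (ζ : ℂ) : ℂ :=
  Complex.exp (α * ζ) * Complex.exp (-(x * Complex.exp (α * ζ)))

theorem continuous_hankelContour (α : ℝ) : Continuous (hankelContour α) := by
  unfold hankelContour
  fun_prop

theorem differentiable_hankelKernel (α x : ℝ) : Differentiable ℂ (hankelKernel α x) := by
  unfold hankelKernel
  fun_prop

theorem mul_contourAngle {α : ℝ} (hα : 0 < α) : α * contourAngle α = π - contourAngle α := by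
  unfold contourAngle
  field_simp
  ring

theorem contourAngle_mem_Ioo {α : ℝ} (hα : 0 < α) (hα' : α < 1) :
    contourAngle α ∈ Ioo (π / 2) π := by
  unfold contourAngle
  constructor
  · exact div_lt_div_of_pos_left Real.pi_pos (by linarith) (by linarith)
  · exact div_lt_self Real.pi_pos (by linarith)

theorem contourDecay_pos {α : ℝ} (hα : 0 < α) (hα' : α < 1) : 0 < contourDecay α := by
  obtain ⟨hlow, hhigh⟩ := contourAngle_mem_Ioo hα hα'
  rw [contourDecay, mul_contourAngle hα]
  exact Real.cos_pos_of_mem_Ioo ⟨by linarith, by linarith⟩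

theorem norm_cexp_mul_hankelContour (α b v : ℝ) :
    ‖Complex.exp (b * hankelContour α v)‖ = Real.exp (b * v) :=
  norm_cexp_mul_add_mul_I b v _

theorem norm_hankelKernel_le {α x v y : ℝ} (hx : 0 ≤ x) (hy : 0 ≤ Real.cos (α * y)) :
    ‖hankelKernel α x (v + y * Complex.I)‖ ≤ Real.exp (α * v) := by
  rw [hankelKernel, norm_mul, norm_cexp_mul_add_mul_I, Complex.norm_exp, Complex.neg_re,
    Complex.re_ofReal_mul, re_cexp_mul_add_mul_I]
  exact mul_le_of_le_one_right (Real.exp_pos _).le (Real.exp_le_one_iff.2 (by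
    rw [neg_nonpos]; positivity))

theorem norm_hankelKernel_hankelContour_le {α x : ℝ} (hα : 0 < α) (hα' : α < 1) (hx : 0 ≤ x)
    (v : ℝ) : ‖hankelKernel α x (hankelContour α v)‖ ≤ Real.exp (α * v) :=
  norm_hankelKernel_le hx (contourDecay_pos hα hα').le

theorem re_cexp_hankelContour {α : ℝ} (hα : 0 < α) (v : ℝ) :
    (Complex.exp (hankelContour α v)).re = -(contourDecay α * Real.exp v) := by
  have hre := re_cexp_mul_add_mul_I 1 v (contourAngle α)
  simp only [Complex.ofReal_one, one_mul] at hre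
  rw [hankelContour, hre, contourDecay, mul_contourAngle hα, Real.cos_pi_sub]
  ring

theorem norm_cexp_mul_cexp_hankelContour {α : ℝ} (hα : 0 < α) (t v : ℝ) :
    ‖Complex.exp (t * Complex.exp (hankelContour α v))‖ =
      Real.exp (-(t * contourDecay α * Real.exp v)) := by
  rw [Complex.norm_exp, Complex.re_ofReal_mul, re_cexp_hankelContour hα]
  ring_nf

theorem exists_mul_exp_mul_le {α ε : ℝ} (hα : 0 < α) (hα' : α < 1) (hε : 0 < ε) (M : ℝ) :
    ∃ C, ∀ v, M * Real.exp (α * v) ≤ ε * Real.exp v + C := by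
  set w := (M - α * Real.log ε) / (1 - α)
  refine ⟨(1 - α) * Real.exp w, fun v => ?_⟩
  have hconv := convexOn_exp.2 (mem_univ (v + Real.log ε)) (mem_univ w) hα.le
    (sub_pos.2 hα').le (by ring)
  have hw : (1 - α) * w = M - α * Real.log ε := mul_div_cancel₀ _ (sub_pos.2 hα').ne'
  have harg : α * (v + Real.log ε) + (1 - α) * w = M + α * v := by
    rw [hw]
    ring
  simp only [smul_eq_mul] at hconv
  rw [harg, Real.exp_add, Real.exp_add, Real.exp_log hε] at hconv
  calc M * Real.exp (α * v) ≤ Real.exp M * Real.exp (α * v) := by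
        gcongr
        linarith [Real.add_one_le_exp M]
    _ ≤ α * (Real.exp v * ε) + (1 - α) * Real.exp w := hconv
    _ ≤ 1 * (Real.exp v * ε) + (1 - α) * Real.exp w := by gcongr
    _ = ε * Real.exp v + (1 - α) * Real.exp w := by ring

theorem integrable_exp_mul_mul_exp_mul_exp_mul_exp_neg {α c : ℝ} (hα : 0 < α) (hα' : α < 1)
    (hc : 0 < c) (M : ℝ) :
    Integrable fun v => Real.exp (M * Real.exp (α * v)) *
      (Real.exp (α * v) * Real.exp (-(c * Real.exp v))) := by
  obtain ⟨C, hC⟩ := exists_mul_exp_mul_le hα hα' (half_pos hc) M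
  refine ((integrable_exp_mul_mul_exp_neg_mul_exp hα (half_pos hc)).const_mul (Real.exp C)).mono'
    (by fun_prop) (.of_forall fun v => ?_)
  rw [Real.norm_of_nonneg (by positivity)]
  simp only [← Real.exp_add]
  exact Real.exp_le_exp.2 (by linarith [hC v])

theorem hasSum_hankelKernel_mul (α x : ℝ) (ζ w : ℂ) :
    HasSum (fun k : ℕ => ((-x) ^ k / k.factorial : ℝ) *
      (Complex.exp ((α * (k + 1) : ℝ) * ζ) * w)) (hankelKernel α x ζ * w) := by
  have h := ((NormedSpace.expSeries_div_hasSum_exp (-(x * Complex.exp (α * ζ)))).mul_left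
    (Complex.exp (α * ζ))).mul_right w
  rw [← Complex.exp_eq_exp_ℂ] at h
  refine h.congr_fun fun k => ?_
  have hpow : Complex.exp ((α * (k + 1) : ℝ) * ζ) =
      Complex.exp (α * ζ) * Complex.exp (α * ζ) ^ k := by
    rw [← Complex.exp_nat_mul, ← Complex.exp_add]
    congr 1
    push_cast
    ring
  rw [hpow, neg_mul_eq_neg_mul, mul_pow]
  push_cast
  ring

theorem integral_cexp_mul_hankelContour_mul {α β : ℝ} (hα : 0 < α) (hα' : α < 1) (hβ : 0 < β) :
    ∫ v, Complex.exp (β * hankelContour α v) * Complex.exp (Complex.exp (hankelContour α v)) =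
      Complex.exp ((π * β : ℝ) * Complex.I) * Real.Gamma β :=
  integral_cexp_mul_mul_cexp_cexp hβ (by
    obtain ⟨hlow, hhigh⟩ := contourAngle_mem_Ioo hα hα'
    exact abs_lt.2 ⟨by linarith, by linarith⟩)

theorem norm_hankelKernel_term {α : ℝ} (hα : 0 < α) (x v : ℝ) (k : ℕ) :
    ‖(((-x) ^ k / k.factorial : ℝ) : ℂ) * (Complex.exp ((α * (k + 1) : ℝ) * hankelContour α v) *
      Complex.exp (Complex.exp (hankelContour α v)))‖ =
      (|x| * Real.exp (α * v)) ^ k / k.factorial *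
        (Real.exp (α * v) * Real.exp (-(contourDecay α * Real.exp v))) := by
  have hdecay := norm_cexp_mul_cexp_hankelContour hα 1 v
  rw [Complex.ofReal_one, one_mul, one_mul] at hdecay
  rw [norm_mul, norm_mul, hdecay, norm_cexp_mul_hankelContour, Complex.norm_real, norm_div,
    norm_pow, norm_neg, Real.norm_eq_abs, Real.norm_natCast, mul_pow, ← Real.exp_nat_mul,
    show α * (k + 1) * v = k * (α * v) + α * v by ring, Real.exp_add]
  ring

theorem hasSum_integral_hankelKernel {α : ℝ} (hα : 0 < α) (hα' : α < 1) (x : ℝ) :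
    HasSum (fun k : ℕ => ((-x) ^ k / k.factorial : ℝ) *
        (Complex.exp ((π * (α * (k + 1)) : ℝ) * Complex.I) * Real.Gamma (α * (k + 1))))
      (∫ v, hankelKernel α x (hankelContour α v) *
        Complex.exp (Complex.exp (hankelContour α v))) := by
  have hcont := continuous_hankelContour α
  set g : ℝ → ℝ := fun v => Real.exp (α * v) * Real.exp (-(contourDecay α * Real.exp v))
  have hbound_sum : ∀ v, HasSum (fun k : ℕ => (|x| * Real.exp (α * v)) ^ k / k.factorial * g v)
      (Real.exp (|x| * Real.exp (α * v)) * g v) := fun v => by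
    have h := NormedSpace.expSeries_div_hasSum_exp (|x| * Real.exp (α * v))
    rw [← Real.exp_eq_exp_ℝ] at h
    exact h.mul_right (g v)
  have hsum := hasSum_integral_of_dominated_convergence
    (F := fun (k : ℕ) v => (((-x) ^ k / k.factorial : ℝ) : ℂ) *
      (Complex.exp ((α * (k + 1) : ℝ) * hankelContour α v) *
        Complex.exp (Complex.exp (hankelContour α v))))
    (fun k v => (|x| * Real.exp (α * v)) ^ k / k.factorial * g v)
    (fun k => Continuous.aestronglyMeasurable (by fun_prop))
    (fun k => .of_forall fun v => (norm_hankelKernel_term hα x v k).le)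
    (.of_forall fun v => (hbound_sum v).summable)
    (by
      simp_rw [(hbound_sum _).tsum_eq]
      exact integrable_exp_mul_mul_exp_mul_exp_mul_exp_neg hα hα' (contourDecay_pos hα hα') |x|)
    (.of_forall fun v => hasSum_hankelKernel_mul α x (hankelContour α v) _)
  refine hsum.congr_fun fun k => ?_
  rw [integral_const_mul, integral_cexp_mul_hankelContour_mul hα hα' (by positivity)]

theorem mittagLefflerDensity_eq_integral {α : ℝ} (hα : 0 < α) (hα' : α < 1) (x : ℝ) :
    mittagLefflerDensity α x = (1 / π) * (∫ v, hankelKernel α x (hankelContour α v) *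
      Complex.exp (Complex.exp (hankelContour α v))).im := by
  have h := Complex.imCLM.hasSum (hasSum_integral_hankelKernel hα hα' x)
  simp only [Complex.imCLM_apply] at h
  rw [mittagLefflerDensity, ← h.tsum_eq]
  congr! 3 with k
  rw [Complex.im_ofReal_mul, Complex.im_mul_ofReal, Complex.exp_ofReal_mul_I_im]
  ring

/-- Rescaling `s` by `t` translates the logarithmic coordinate by `log t`. -/
theorem rpow_neg_mul_mittagLefflerDensity {α t : ℝ} (hα : 0 < α) (hα' : α < 1) (ht : 0 < t)
    (x : ℝ) :
    t ^ (-α) * mittagLefflerDensity α (t ^ (-α) * x) =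
      (1 / π) * (∫ v, hankelKernel α x (hankelContour α v) *
        Complex.exp (t * Complex.exp (hankelContour α v))).im := by
  have hshift : ∀ v, hankelContour α (v + Real.log t) = hankelContour α v + Real.log t := by
    intro v
    unfold hankelContour
    push_cast
    ring
  have hexp : ∀ ζ : ℂ, Complex.exp (ζ + Real.log t) = t * Complex.exp ζ := by
    intro ζ
    rw [Complex.exp_add, ← Complex.ofReal_exp, Real.exp_log ht, mul_comm]
  have hexp_mul : ∀ ζ : ℂ, Complex.exp (α * (ζ + Real.log t)) =
      (t ^ α : ℝ) * Complex.exp (α * ζ) := by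
    intro ζ
    rw [mul_add, Complex.exp_add, Real.rpow_def_of_pos ht, mul_comm (Real.log t)]
    push_cast
    ring
  have hkernel : ∀ ζ : ℂ, hankelKernel α (t ^ (-α) * x) (ζ + Real.log t) =
      (t ^ α : ℝ) * hankelKernel α x ζ := by
    intro ζ
    have hcancel : ((t ^ (-α) : ℝ) : ℂ) * (t ^ α : ℝ) = 1 := by
      rw [← Complex.ofReal_mul, ← Real.rpow_add ht, neg_add_cancel, Real.rpow_zero,
        Complex.ofReal_one]
    have harg : ((t ^ (-α) * x : ℝ) : ℂ) * ((t ^ α : ℝ) * Complex.exp (α * ζ)) =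
        x * Complex.exp (α * ζ) := by
      push_cast at hcancel ⊢
      linear_combination x * Complex.exp (α * ζ) * hcancel
    rw [hankelKernel, hexp_mul, harg, hankelKernel, mul_assoc]
  rw [mittagLefflerDensity_eq_integral hα hα', ← integral_add_right_eq_self _ (Real.log t)]
  simp_rw [hshift, hkernel, hexp, mul_assoc]
  rw [integral_const_mul, Complex.im_ofReal_mul, mul_left_comm, ← mul_assoc (t ^ (-α)),
    ← Real.rpow_add ht, neg_add_cancel, Real.rpow_zero, one_mul]

theorem norm_hankelKernel_mul_cexp_le {α x : ℝ} (hα : 0 < α) (hα' : α < 1) (hx : 0 ≤ x)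
    (t v : ℝ) :
    ‖hankelKernel α x (hankelContour α v) * Complex.exp (t * Complex.exp (hankelContour α v))‖ ≤
      Real.exp (α * v) * Real.exp (-(t * contourDecay α * Real.exp v)) := by
  rw [norm_mul, norm_cexp_mul_cexp_hankelContour hα]
  gcongr
  exact norm_hankelKernel_hankelContour_le hα hα' hx v

theorem integral_norm_hankelKernel_mul_cexp_le {α x t : ℝ} (hα : 0 < α) (hα' : α < 1)
    (hx : 0 ≤ x) (ht : 0 < t) :
    ∫ v, ‖hankelKernel α x (hankelContour α v) *
      Complex.exp (t * Complex.exp (hankelContour α v))‖ ≤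
      t ^ (-α) * ((1 / contourDecay α) ^ α * Real.Gamma α) := by
  have hc := contourDecay_pos hα hα'
  refine (integral_mono_of_nonneg (.of_forall fun v => norm_nonneg _)
    (integrable_exp_mul_mul_exp_neg_mul_exp hα (mul_pos ht hc))
    (.of_forall (norm_hankelKernel_mul_cexp_le hα hα' hx t))).trans_eq ?_
  rw [integral_exp_mul_mul_exp_neg_mul_exp hα (mul_pos ht hc), ← one_div_mul_one_div,
    Real.mul_rpow (by positivity) (by positivity), one_div t, Real.inv_rpow ht.le,
    ← Real.rpow_neg ht.le, mul_assoc]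

theorem exists_abs_mittagLefflerDensity_le {α : ℝ} (hα : 0 < α) (hα' : α < 1) :
    ∃ B, ∀ x, 0 ≤ x → |mittagLefflerDensity α x| ≤ B := by
  refine ⟨(1 / π) * ((1 / contourDecay α) ^ α * Real.Gamma α), fun x hx => ?_⟩
  rw [mittagLefflerDensity_eq_integral hα hα', abs_mul, abs_of_pos (by positivity)]
  gcongr
  have hbound := integral_norm_hankelKernel_mul_cexp_le hα hα' hx one_pos
  simp only [Complex.ofReal_one, one_mul, Real.one_rpow] at hbound
  exact (Complex.abs_im_le_norm _).trans ((norm_integral_le_integral_norm _).trans hbound)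

/-! ### The Laplace transform of the Mittag-Leffler density -/

theorem integrableOn_exp_neg_mul_rpow_neg {α : ℝ} (hα' : α < 1) :
    IntegrableOn (fun t => Real.exp (-t) * t ^ (-α)) (Ioi 0) := by
  simpa using Real.GammaIntegral_convergent (sub_pos.2 hα')

theorem integral_exp_neg_mul_rpow_neg (α : ℝ) (hα' : α < 1) :
    ∫ t in Ioi (0 : ℝ), Real.exp (-t) * t ^ (-α) = Real.Gamma (1 - α) := by
  simp [Real.Gamma_eq_integral (sub_pos.2 hα')]

theorem integrable_exp_neg_mul_hankelKernel_mul_cexp {α x : ℝ} (hα : 0 < α) (hα' : α < 1)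
    (hx : 0 ≤ x) :
    Integrable (fun z : ℝ × ℝ => (Real.exp (-z.1) : ℂ) * (hankelKernel α x (hankelContour α z.2) *
      Complex.exp (z.1 * Complex.exp (hankelContour α z.2))))
      ((volume.restrict (Ioi 0)).prod volume) := by
  have hcont := continuous_hankelContour α
  have hkernel := (differentiable_hankelKernel α x).continuous
  have hmeas : AEStronglyMeasurable (fun z : ℝ × ℝ => (Real.exp (-z.1) : ℂ) *
      (hankelKernel α x (hankelContour α z.2) *
        Complex.exp (z.1 * Complex.exp (hankelContour α z.2))))
      ((volume.restrict (Ioi 0)).prod volume) :=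
    Continuous.aestronglyMeasurable (by fun_prop)
  refine (integrable_prod_iff hmeas).2 ⟨?_, ?_⟩
  · filter_upwards [ae_restrict_mem measurableSet_Ioi] with t ht
    refine Integrable.const_mul ((integrable_exp_mul_mul_exp_neg_mul_exp hα
      (mul_pos ht (contourDecay_pos hα hα'))).mono' ?_
      (.of_forall (norm_hankelKernel_mul_cexp_le hα hα' hx t))) _
    exact Continuous.aestronglyMeasurable (by fun_prop)
  · refine ((integrableOn_exp_neg_mul_rpow_neg hα').mul_const
      ((1 / contourDecay α) ^ α * Real.Gamma α)).mono' hmeas.norm.integral_prod_right' ?_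
    filter_upwards [ae_restrict_mem measurableSet_Ioi] with t ht
    simp_rw [norm_mul (Complex.ofReal _), Complex.norm_real,
      Real.norm_of_nonneg (Real.exp_pos _).le]
    rw [Real.norm_of_nonneg (integral_nonneg fun v => by positivity), integral_const_mul, mul_assoc]
    gcongr
    exact integral_norm_hankelKernel_mul_cexp_le hα hα' hx ht

theorem exp_neg_mul_rpow_neg_mul_mittagLefflerDensity {α t : ℝ} (hα : 0 < α) (hα' : α < 1)
    (ht : 0 < t) (x : ℝ) :
    Real.exp (-t) * t ^ (-α) * mittagLefflerDensity α (t ^ (-α) * x) =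
      (1 / π) * (∫ v, (Real.exp (-t) : ℂ) * (hankelKernel α x (hankelContour α v) *
        Complex.exp (t * Complex.exp (hankelContour α v)))).im := by
  rw [mul_assoc, rpow_neg_mul_mittagLefflerDensity hα hα' ht, integral_const_mul,
    Complex.im_ofReal_mul]
  ring

theorem integrableOn_exp_neg_mul_rpow_neg_mul_mittagLefflerDensity {α x : ℝ} (hα : 0 < α)
    (hα' : α < 1) (hx : 0 ≤ x) :
    IntegrableOn (fun t => Real.exp (-t) * t ^ (-α) * mittagLefflerDensity α (t ^ (-α) * x))
      (Ioi 0) := by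
  have h := (integrable_exp_neg_mul_hankelKernel_mul_cexp hα hα' hx).integral_prod_left
  exact IntegrableOn.congr_fun (h.im.const_mul (1 / π))
    (fun t ht => (exp_neg_mul_rpow_neg_mul_mittagLefflerDensity hα hα' ht x).symm)
    measurableSet_Ioi

theorem integral_exp_neg_mul_mul_cexp {s : ℂ} (hs : s.re < 1) (K : ℂ) :
    ∫ t in Ioi (0 : ℝ), (Real.exp (-t) : ℂ) * (K * Complex.exp (t * s)) = K / (1 - s) := by
  have hexp : ∀ t : ℝ, (Real.exp (-t) : ℂ) * (K * Complex.exp (t * s)) =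
      K * Complex.exp ((s - 1) * t) := by
    intro t
    rw [mul_left_comm, Complex.ofReal_exp, ← Complex.exp_add]
    congr 2
    push_cast
    ring
  simp_rw [hexp]
  rw [integral_const_mul, integral_exp_mul_complex_Ioi (by simpa using hs), Complex.ofReal_zero,
    mul_zero, Complex.exp_zero, neg_div, ← div_neg, neg_sub, mul_one_div]

theorem re_cexp_hankelContour_lt_one {α : ℝ} (hα : 0 < α) (hα' : α < 1) (v : ℝ) :
    (Complex.exp (hankelContour α v)).re < 1 := by
  rw [re_cexp_hankelContour hα]
  linarith [mul_pos (contourDecay_pos hα hα') (Real.exp_pos v)]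

theorem integrable_hankelKernel_div {α x : ℝ} (hα : 0 < α) (hα' : α < 1) (hx : 0 ≤ x) :
    Integrable fun v =>
      hankelKernel α x (hankelContour α v) / (1 - Complex.exp (hankelContour α v)) := by
  have h := (integrable_exp_neg_mul_hankelKernel_mul_cexp hα hα' hx).integral_prod_right
  simpa only [integral_exp_neg_mul_mul_cexp (re_cexp_hankelContour_lt_one hα hα' _)] using h

theorem integral_mittagLefflerDensity_eq_integral_hankelKernel_div {α x : ℝ} (hα : 0 < α)
    (hα' : α < 1) (hx : 0 ≤ x) :
    ∫ t in Ioi (0 : ℝ), Real.exp (-t) * t ^ (-α) * mittagLefflerDensity α (t ^ (-α) * x) =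
      (1 / π) * (∫ v, hankelKernel α x (hankelContour α v) /
        (1 - Complex.exp (hankelContour α v))).im := by
  have hint := integrable_exp_neg_mul_hankelKernel_mul_cexp hα hα' hx
  rw [setIntegral_congr_fun measurableSet_Ioi fun t ht =>
    exp_neg_mul_rpow_neg_mul_mittagLefflerDensity hα hα' ht x, integral_const_mul]
  congr 1
  have him := integral_im hint.integral_prod_left
  simp only [RCLike.im_to_complex] at him
  rw [him, integral_integral_swap hint]
  simp_rw [integral_exp_neg_mul_mul_cexp (re_cexp_hankelContour_lt_one hα hα' _)]

theorem tendsto_cocompact_exp_mul_div_abs_one_sub_exp {α : ℝ} (hα : 0 < α) (hα' : α < 1) :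
    Tendsto (fun v => Real.exp (α * v) / |1 - Real.exp v|) (cocompact ℝ) (𝓝 0) := by
  rw [cocompact_eq_atBot_atTop, tendsto_sup]
  constructor
  · have hnum := Real.tendsto_exp_atBot.comp (tendsto_id.const_mul_atBot hα)
    have hden := (Real.tendsto_exp_atBot.const_sub 1).abs
    have hlim := hnum.div hden (by norm_num)
    rwa [zero_div] at hlim
  · have hnum := Real.tendsto_exp_atBot.comp (tendsto_id.const_mul_atTop_of_neg (sub_neg.2 hα'))
    have hden := ((Real.tendsto_exp_atBot.comp tendsto_neg_atTop_atBot).sub_const 1).abs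
    have hlim := hnum.div hden (by norm_num)
    simp only [zero_sub, abs_neg, abs_one, zero_div] at hlim
    refine hlim.congr fun v => ?_
    have hfactor : |1 - Real.exp v| = Real.exp v * |Real.exp (-v) - 1| := by
      rw [← abs_of_pos (Real.exp_pos v), ← abs_mul, abs_of_pos (Real.exp_pos v), mul_sub,
        ← Real.exp_add, add_neg_cancel, Real.exp_zero, mul_one]
    simp only [Pi.div_apply, Function.comp_apply, id]
    rw [hfactor, ← div_div, ← Real.exp_sub]
    ring_nf

theorem abs_one_sub_exp_le_norm (v y : ℝ) :
    |1 - Real.exp v| ≤ ‖1 - Complex.exp (v + y * Complex.I)‖ := by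
  have h := abs_norm_sub_norm_le 1 (Complex.exp (v + y * Complex.I))
  rwa [norm_one, show ‖Complex.exp (v + y * Complex.I)‖ = Real.exp v by
    simp [Complex.norm_exp]] at h

theorem norm_div_one_sub_cexp_le {w : ℂ} {C v : ℝ} (hw : ‖w‖ ≤ C) (hv : v ≠ 0) (y : ℝ) :
    ‖w / (1 - Complex.exp (v + y * Complex.I))‖ ≤ C / |1 - Real.exp v| := by
  have hv_pos : 0 < |1 - Real.exp v| :=
    abs_pos.2 (sub_ne_zero.2 fun h => hv (by simpa using h.symm))
  rw [norm_div]
  exact div_le_div₀ ((norm_nonneg _).trans hw) hw hv_pos (abs_one_sub_exp_le_norm v y)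

theorem im_intervalIntegral_eq_zero {f : ℝ → ℂ} (hf : ∀ᵐ v, (f v).im = 0) (a b : ℝ) :
    (∫ v in a..b, f v).im = 0 := by
  have hae : ∀ᵐ v, v ∈ uIoc a b → f v = ((f v).re : ℂ) :=
    hf.mono fun v hv _ => Complex.ext rfl hv
  rw [intervalIntegral.integral_congr_ae hae, intervalIntegral.integral_ofReal, Complex.ofReal_im]

theorem dslope_div_dslope {f g : ℂ → ℂ} {c ζ : ℂ} (hf : f c = 0) (hg : g c = 0) (hζ : ζ ≠ c) :
    dslope f c ζ / dslope g c ζ = f ζ / g ζ := by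
  rw [dslope_of_ne _ hζ, dslope_of_ne _ hζ, slope_def_field, slope_def_field, hf, hg, sub_zero,
    sub_zero, div_div_div_cancel_right₀ (sub_ne_zero.2 hζ)]

theorem differentiable_dslope {f : ℂ → ℂ} (hf : Differentiable ℂ f) (c : ℂ) :
    Differentiable ℂ (dslope f c) :=
  differentiableOn_univ.1 ((Complex.differentiableOn_dslope univ_mem).2 hf.differentiableOn)

theorem dslope_one_sub_cexp_ne_zero {ζ : ℂ} (hlow : -π < ζ.im) (hhigh : ζ.im ≤ π) :
    dslope (fun z => 1 - Complex.exp z) 0 ζ ≠ 0 := by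
  rcases eq_or_ne ζ 0 with rfl | hζ
  · rw [dslope_same, ((Complex.hasDerivAt_exp 0).const_sub 1).deriv, Complex.exp_zero]
    exact neg_ne_zero.2 one_ne_zero
  · rw [dslope_of_ne _ hζ, slope_def_field, Complex.exp_zero, sub_self, sub_zero, sub_zero,
      ← Complex.exp_zero]
    refine div_ne_zero (sub_ne_zero.2 fun h => hζ ?_) hζ
    exact (Complex.exp_inj_of_neg_pi_lt_of_le_pi (by simpa using Real.pi_pos) Real.pi_pos.le hlow
      hhigh h).symm

/-- The zero of `g` removes the only pole in the strip, so the line of integration can be moved to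
the real axis, where the integrand is real. -/
theorem im_integral_div_one_sub_cexp_eq_zero {g : ℂ → ℂ} {α M θ : ℝ} (hg : Differentiable ℂ g)
    (hg_zero : g 0 = 0) (hg_real : ∀ v : ℝ, (g v).im = 0) (hα : 0 < α) (hα' : α < 1)
    (hθ : 0 < θ) (hθ' : θ ≤ π)
    (hg_bound : ∀ v : ℝ, ∀ y ∈ Icc 0 θ, ‖g (v + y * Complex.I)‖ ≤ M * Real.exp (α * v))
    (hint : Integrable fun v : ℝ =>
      g (v + θ * Complex.I) / (1 - Complex.exp (v + θ * Complex.I))) :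
    (∫ v : ℝ, g (v + θ * Complex.I) / (1 - Complex.exp (v + θ * Complex.I))).im = 0 := by
  rw [← uIcc_of_le hθ.le] at hg_bound
  set D : ℂ → ℂ := fun ζ => dslope g 0 ζ / dslope (fun z => 1 - Complex.exp z) 0 ζ
  have hD_ne : ∀ ζ ≠ 0, D ζ = g ζ / (1 - Complex.exp ζ) := fun ζ hζ =>
    dslope_div_dslope hg_zero (by simp) hζ
  have hD : DifferentiableOn ℂ D {ζ | ζ.im ∈ uIcc 0 θ} := by
    refine (differentiable_dslope hg 0).differentiableOn.div
      (differentiable_dslope (by fun_prop) 0).differentiableOn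
      fun ζ (hζ : ζ.im ∈ uIcc 0 θ) => ?_
    rw [uIcc_of_le hθ.le] at hζ
    exact dslope_one_sub_cexp_ne_zero (by linarith [hζ.1, Real.pi_pos]) (hζ.2.trans hθ')
  have hD_bound : ∀ᶠ v : ℝ in cocompact ℝ, ∀ y ∈ uIcc 0 θ, ‖D (v + y * Complex.I)‖ ≤
      M * (Real.exp (α * v) / |1 - Real.exp v|) := by
    filter_upwards [isCompact_singleton.compl_mem_cocompact] with v (hv : v ≠ 0) y hy
    rw [hD_ne _ fun h => hv (by simpa using congrArg Complex.re h), ← mul_div_assoc]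
    exact norm_div_one_sub_cexp_le (hg_bound v y hy) hv y
  have hD_real : ∀ᵐ v : ℝ, (D v).im = 0 := by
    filter_upwards [Measure.ae_ne volume 0] with v hv
    rw [hD_ne v (by exact_mod_cast hv), ← Complex.ofReal_exp, ← Complex.ofReal_one,
      ← Complex.ofReal_sub, Complex.div_ofReal_im, hg_real, zero_div]
  have hD_top : ∀ v : ℝ, D (v + θ * Complex.I) =
      g (v + θ * Complex.I) / (1 - Complex.exp (v + θ * Complex.I)) := fun v =>
    hD_ne _ fun h => hθ.ne' (by simpa using congrArg Complex.im h)
  simp_rw [← hD_top] at hint ⊢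
  have hlim := tendsto_intervalIntegral_integral_add_mul_I hD hD_bound
    (by simpa using (tendsto_cocompact_exp_mul_div_abs_one_sub_exp hα hα').const_mul M) hint
  have hlim_im := (Complex.continuous_im.tendsto _).comp hlim
  simp only [Function.comp_def, im_intervalIntegral_eq_zero hD_real] at hlim_im
  exact tendsto_nhds_unique hlim_im tendsto_const_nhds

theorem im_hankelKernel_ofReal (α x v : ℝ) : (hankelKernel α x v).im = 0 := by
  have h : hankelKernel α x v =
      ((Real.exp (α * v) * Real.exp (-(x * Real.exp (α * v))) : ℝ) : ℂ) := by
    unfold hankelKernel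
    push_cast
    rfl
  rw [h, Complex.ofReal_im]

theorem hankelKernel_zero_right (α x : ℝ) : hankelKernel α x 0 = Real.exp (-x) := by
  simp [hankelKernel]

theorem cos_mul_nonneg_of_mem_Icc_contourAngle {α y : ℝ} (hα : 0 < α) (hα' : α < 1)
    (hy : y ∈ Icc 0 (contourAngle α)) : 0 ≤ Real.cos (α * y) := by
  obtain ⟨hlow, -⟩ := contourAngle_mem_Ioo hα hα'
  have hy_le : α * y ≤ α * contourAngle α := by gcongr; exact hy.2
  rw [mul_contourAngle hα] at hy_le
  exact Real.cos_nonneg_of_neg_pi_div_two_le_of_le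
    (by linarith [mul_nonneg hα.le hy.1, Real.pi_pos]) (by linarith)

theorem im_integral_hankelKernel_div {α x : ℝ} (hα : 0 < α) (hα' : α < 1) (hx : 0 ≤ x) :
    (∫ v, hankelKernel α x (hankelContour α v) / (1 - Complex.exp (hankelContour α v))).im =
      Real.exp (-x) * (∫ v, hankelKernel α 0 (hankelContour α v) /
        (1 - Complex.exp (hankelContour α v))).im := by
  obtain ⟨hlow, hhigh⟩ := contourAngle_mem_Ioo hα hα'
  have hint_x := integrable_hankelKernel_div hα hα' hx
  have hint_zero := (integrable_hankelKernel_div hα hα' le_rfl).const_mul (Real.exp (-x) : ℂ)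
  set g : ℂ → ℂ := fun ζ => hankelKernel α x ζ - Real.exp (-x) * hankelKernel α 0 ζ
  have hg_div : ∀ ζ, g ζ / (1 - Complex.exp ζ) = hankelKernel α x ζ / (1 - Complex.exp ζ) -
      Real.exp (-x) * (hankelKernel α 0 ζ / (1 - Complex.exp ζ)) := fun ζ => by
    rw [sub_div, mul_div_assoc]
  have hg_bound : ∀ v : ℝ, ∀ y ∈ Icc 0 (contourAngle α),
      ‖g (v + y * Complex.I)‖ ≤ (1 + Real.exp (-x)) * Real.exp (α * v) := by
    intro v y hy
    have hcos := cos_mul_nonneg_of_mem_Icc_contourAngle hα hα' hy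
    refine (norm_sub_le _ _).trans ?_
    rw [norm_mul, Complex.norm_real, Real.norm_of_nonneg (Real.exp_pos _).le, add_mul, one_mul]
    gcongr
    · exact norm_hankelKernel_le hx hcos
    · exact norm_hankelKernel_le le_rfl hcos
  have hshift : (∫ v, g (hankelContour α v) / (1 - Complex.exp (hankelContour α v))).im = 0 :=
    im_integral_div_one_sub_cexp_eq_zero
      ((differentiable_hankelKernel α x).sub ((differentiable_hankelKernel α 0).const_mul _))
      (by simp [g, hankelKernel_zero_right])
      (fun v => by simp only [g, Complex.sub_im, Complex.im_ofReal_mul, im_hankelKernel_ofReal,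
        mul_zero, sub_zero]) hα hα'
      (by linarith [Real.pi_pos]) hhigh.le hg_bound
      (by
        simp only [hg_div]
        exact hint_x.sub hint_zero)
  simp only [hg_div] at hshift
  rw [integral_sub hint_x hint_zero, integral_const_mul, Complex.sub_im, Complex.im_ofReal_mul]
    at hshift
  linarith

theorem mittagLefflerDensity_zero_right (α : ℝ) :
    mittagLefflerDensity α 0 = (1 / π) * (Real.sin (π * α) * Real.Gamma α) := by
  rw [mittagLefflerDensity, tsum_eq_single 0 fun k hk => by simp [hk]]
  simp

theorem integral_mittagLefflerDensity_zero {α : ℝ} (hα : 0 < α) (hα' : α < 1) :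
    ∫ t in Ioi (0 : ℝ), Real.exp (-t) * t ^ (-α) * mittagLefflerDensity α (t ^ (-α) * 0) = 1 := by
  have hsin : Real.sin (π * α) ≠ 0 :=
    (Real.sin_pos_of_pos_of_lt_pi (by positivity) (by nlinarith [Real.pi_pos])).ne'
  simp_rw [mul_zero]
  rw [integral_mul_const, integral_exp_neg_mul_rpow_neg α hα', mittagLefflerDensity_zero_right]
  have hreflect := Real.Gamma_mul_Gamma_one_sub α
  calc Real.Gamma (1 - α) * (1 / π * (Real.sin (π * α) * Real.Gamma α))
      = 1 / π * Real.sin (π * α) * (Real.Gamma α * Real.Gamma (1 - α)) := by ring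
    _ = 1 := by
      rw [hreflect]
      field_simp

theorem integral_exp_neg_mul_rpow_neg_mul_mittagLefflerDensity {α x : ℝ} (hα : 0 < α)
    (hα' : α < 1) (hx : 0 ≤ x) :
    ∫ t in Ioi (0 : ℝ), Real.exp (-t) * t ^ (-α) * mittagLefflerDensity α (t ^ (-α) * x) =
      Real.exp (-x) := by
  have hzero := integral_mittagLefflerDensity_zero hα hα'
  rw [integral_mittagLefflerDensity_eq_integral_hankelKernel_div hα hα' le_rfl] at hzero
  rw [integral_mittagLefflerDensity_eq_integral_hankelKernel_div hα hα' hx,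
    im_integral_hankelKernel_div hα hα' hx, mul_left_comm, hzero, mul_one]

section Mixture

variable {ι : Type*} {α : ℝ} {c y : ι → ℝ}

theorem summable_mul_mittagLefflerDensity (hα : 0 < α) (hα' : α < 1) (hc : Summable c)
    (hy : ∀ i, 0 ≤ y i) : Summable fun i => c i * mittagLefflerDensity α (y i) := by
  obtain ⟨B, hB⟩ := exists_abs_mittagLefflerDensity_le hα hα'
  refine Summable.of_norm_bounded (hc.norm.mul_right B) fun i => ?_
  rw [norm_mul]
  gcongr
  exact hB (y i) (hy i)

theorem summable_mul_exp_neg (hc : Summable c) (hy : ∀ i, 0 ≤ y i) :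
    Summable fun i => c i * Real.exp (-y i) := by
  refine Summable.of_norm_bounded hc.norm fun i => ?_
  rw [norm_mul, Real.norm_of_nonneg (Real.exp_pos _).le]
  exact mul_le_of_le_one_right (norm_nonneg _) (Real.exp_le_one_iff.2 (neg_nonpos.2 (hy i)))

theorem exists_integral_norm_mittagLefflerDensity_le (hα : 0 < α) (hα' : α < 1) :
    ∃ B, ∀ x, 0 ≤ x → ∫ t in Ioi (0 : ℝ),
      ‖Real.exp (-t) * t ^ (-α) * mittagLefflerDensity α (t ^ (-α) * x)‖ ≤ B := by
  obtain ⟨B, hB⟩ := exists_abs_mittagLefflerDensity_le hα hα'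
  refine ⟨_, fun x hx => setIntegral_mono_on
    (integrableOn_exp_neg_mul_rpow_neg_mul_mittagLefflerDensity hα hα' hx).norm
    ((integrableOn_exp_neg_mul_rpow_neg hα').mul_const B) measurableSet_Ioi
    fun t (ht : 0 < t) => ?_⟩
  rw [norm_mul, Real.norm_of_nonneg (by positivity)]
  gcongr
  exact hB _ (by positivity)

theorem integral_tsum_mul_mittagLefflerDensity [Countable ι] (hα : 0 < α) (hα' : α < 1)
    (hc : Summable c) (hy : ∀ i, 0 ≤ y i) :
    ∫ t in Ioi (0 : ℝ), Real.exp (-t) * t ^ (-α) *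
        ∑' i, c i * mittagLefflerDensity α (t ^ (-α) * y i) =
      ∑' i, c i * Real.exp (-y i) := by
  set F : ι → ℝ → ℝ := fun i t =>
    c i * (Real.exp (-t) * t ^ (-α) * mittagLefflerDensity α (t ^ (-α) * y i))
  have hF_int : ∀ i, IntegrableOn (F i) (Ioi 0) := fun i =>
    (integrableOn_exp_neg_mul_rpow_neg_mul_mittagLefflerDensity hα hα' (hy i)).const_mul (c i)
  have hF_sum : Summable fun i => ∫ t in Ioi 0, ‖F i t‖ := by
    obtain ⟨B, hB⟩ := exists_integral_norm_mittagLefflerDensity_le hα hα'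
    refine Summable.of_nonneg_of_le (fun i => by positivity) (fun i => ?_) (hc.norm.mul_right B)
    simp_rw [F, norm_mul (c i)]
    rw [integral_const_mul]
    gcongr
    exact hB (y i) (hy i)
  calc ∫ t in Ioi (0 : ℝ), Real.exp (-t) * t ^ (-α) *
        ∑' i, c i * mittagLefflerDensity α (t ^ (-α) * y i)
      = ∫ t in Ioi 0, ∑' i, F i t := by
        simp_rw [← tsum_mul_left, F, mul_left_comm]
    _ = ∑' i, ∫ t in Ioi 0, F i t := (integral_tsum_of_summable_integral_norm hF_int hF_sum).symm
    _ = ∑' i, c i * Real.exp (-y i) := by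
        simp_rw [F, integral_const_mul,
          integral_exp_neg_mul_rpow_neg_mul_mittagLefflerDensity hα hα' (hy _)]

end Mixture

/-! ### Critical points of solutions of the Airy equation -/

theorem eq_zero_of_hasDerivAt_of_hasDerivAt_mul {q y y' : ℝ → ℝ} {a : ℝ} (hq : Continuous q)
    (hy : ∀ x, HasDerivAt y (y' x) x) (hy' : ∀ x, HasDerivAt y' (q x * y x) x)
    (hy_a : y a = 0) (hy'_a : y' a = 0) : y = 0 := by
  funext x
  obtain ⟨l, r, hx, ha⟩ : ∃ l r, x ∈ Ioo l r ∧ a ∈ Ioo l r :=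
    ⟨min x a - 1, max x a + 1, by grind, by grind⟩
  obtain ⟨Q, hQ⟩ := (isCompact_Icc (a := l) (b := r)).exists_bound_of_continuousOn hq.continuousOn
  have hlip : ∀ t ∈ Ioo l r,
      LipschitzOnWith (max 1 Q.toNNReal) (fun z : ℝ × ℝ => (z.2, q t * z.1)) univ := by
    intro t ht
    have hqt : ‖q t‖₊ ≤ Q.toNNReal := by
      rw [← NNReal.coe_le_coe, coe_nnnorm]
      exact (hQ t (Ioo_subset_Icc_self ht)).trans (Real.le_coe_toNNReal Q)
    have hmul : LipschitzWith Q.toNNReal fun z : ℝ × ℝ => q t * z.1 := by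
      rw [← mul_one Q.toNNReal]
      exact ((lipschitzWith_smul (q t)).weaken hqt).comp LipschitzWith.prod_fst
    exact (LipschitzWith.prod_snd.prodMk hmul).lipschitzOnWith
  have hzero := ODE_solution_unique_of_mem_Ioo hlip ha (f := fun t => (y t, y' t))
    (g := fun _ => 0) (fun t _ => ⟨(hy t).prodMk (hy' t), mem_univ _⟩)
    (fun t _ => ⟨by simpa using! hasDerivAt_const t (0 : ℝ × ℝ), mem_univ _⟩)
    (by simp [hy_a, hy'_a])
  exact congrArg Prod.fst (hzero hx)

theorem one_le_mul_sub_sq_of_hasDerivAt_mul {q y y' : ℝ → ℝ} {a c Q : ℝ} (hac : a ≤ c)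
    (hQ : ∀ x ∈ Icc a c, |q x| ≤ Q) (hy : ∀ x ∈ Icc a c, HasDerivAt y (y' x) x)
    (hy' : ∀ x ∈ Icc a c, HasDerivAt y' (q x * y x) x)
    (hy'_a : y' a = 0) (hy_a : y a ≠ 0) (hy_c : y c = 0) : 1 ≤ Q * (c - a) ^ 2 := by
  have ha : a ∈ Icc a c := left_mem_Icc.2 hac
  obtain ⟨m, hm, hmax⟩ := isCompact_Icc.exists_isMaxOn ⟨a, ha⟩
    (HasDerivAt.continuousOn hy).abs
  have hpos : 0 < |y m| := (abs_pos.2 hy_a).trans_le (hmax ha)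
  have hQ_nonneg : 0 ≤ Q := (abs_nonneg _).trans (hQ a ha)
  have hy'_le : ∀ x ∈ Icc a c, ‖y' x‖ ≤ Q * |y m| * (c - a) := by
    intro x hx
    have h := (convex_Icc a c).norm_image_sub_le_of_norm_hasDerivWithin_le
      (fun z hz => (hy' z hz).hasDerivWithinAt) (C := Q * |y m|)
      (fun z hz => by
        rw [norm_mul]
        exact mul_le_mul (hQ z hz) (hmax hz) (norm_nonneg _) hQ_nonneg) ha hx
    rw [hy'_a, sub_zero, Real.norm_of_nonneg (sub_nonneg.2 hx.1)] at h
    refine h.trans ?_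
    gcongr
    exact hx.2
  have hy_m := (convex_Icc a c).norm_image_sub_le_of_norm_hasDerivWithin_le
    (fun z hz => (hy z hz).hasDerivWithinAt) hy'_le hm (right_mem_Icc.2 hac)
  rw [hy_c, zero_sub, norm_neg, Real.norm_eq_abs, Real.norm_of_nonneg (sub_nonneg.2 hm.2)] at hy_m
  refine le_of_mul_le_mul_right ?_ hpos
  calc 1 * |y m| ≤ Q * |y m| * (c - a) * (c - m) := by rwa [one_mul]
    _ ≤ Q * |y m| * (c - a) * (c - a) := by
      have := hm.1
      have := sub_nonneg.2 hac
      gcongr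
    _ = Q * (c - a) ^ 2 * |y m| := by ring

theorem one_le_mul_sub_sq_of_airy {u u' : ℝ → ℝ} (hu : ∀ h, HasDerivAt u (u' h) h)
    (hu' : ∀ h, HasDerivAt u' (2 * h * u h) h) (hu_ne : u ≠ 0) {a b : ℝ} (ha : 0 < a)
    (hab : a < b) (hu'_a : u' (-a) = 0) (hu'_b : u' (-b) = 0) : 1 ≤ 2 * b * (b - a) ^ 2 := by
  obtain ⟨c, ⟨hbc, hca⟩, hc⟩ := exists_hasDerivAt_eq_zero (neg_lt_neg hab)
    (HasDerivAt.continuousOn fun x _ => hu' x) (hu'_b.trans hu'_a.symm) fun x _ => hu' x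
  have hu_c : u c = 0 := (mul_eq_zero.1 hc).resolve_left (by linarith)
  have hu_b : u (-b) ≠ 0 := fun h => hu_ne
    (eq_zero_of_hasDerivAt_of_hasDerivAt_mul (by fun_prop) hu hu' h hu'_b)
  have hgap := one_le_mul_sub_sq_of_hasDerivAt_mul (Q := 2 * b) hbc.le
    (fun x hx => abs_le.2 ⟨by linarith [hx.1], by linarith [hx.2]⟩) (fun x _ => hu x)
    (fun x _ => hu' x) hu'_b hu_b hu_c
  refine hgap.trans ?_
  have hb := ha.trans hab
  have : 0 ≤ c - -b := by linarith
  have hcb : c - -b ≤ b - a := by linarith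
  gcongr

section GapSequence

variable {δ : ℕ → ℝ} {C : ℝ}

theorem sq_le_mul_pow_three_of_gap (hδ_pos : ∀ k, 0 < δ k) (hδ_mono : StrictMono δ) (hC : 0 ≤ C)
    (hgap : ∀ k, 1 ≤ C * δ (k + 1) * (δ (k + 1) - δ k) ^ 2) (k : ℕ) :
    (k : ℝ) ^ 2 ≤ C * δ k ^ 3 := by
  induction k with
  | zero =>
    have := hδ_pos 0
    simp only [Nat.cast_zero, ne_eq, OfNat.ofNat_ne_zero, not_false_eq_true, zero_pow]
    positivity
  | succ k ih =>
    have hx := hδ_pos k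
    have hxy := hδ_mono k.lt_succ_self
    have hgap_k := hgap k
    set x := δ k
    set y := δ (k + 1)
    have hfirst : (k : ℝ) ^ 2 ≤ C * y * x ^ 2 := by
      refine ih.trans ?_
      rw [pow_succ', ← mul_assoc]
      gcongr
    have hcross : (k : ℝ) ≤ C * y * x * (y - x) := by
      have hC_mul := mul_nonneg (mul_nonneg hC (hx.trans hxy).le) hx.le
      refine (sq_le_sq₀ k.cast_nonneg (mul_nonneg hC_mul (sub_nonneg.2 hxy.le))).1 ?_
      calc (k : ℝ) ^ 2 ≤ C * y * x ^ 2 := hfirst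
        _ ≤ C * y * x ^ 2 * (C * y * (y - x) ^ 2) :=
          le_mul_of_one_le_right ((sq_nonneg _).trans hfirst) hgap_k
        _ = (C * y * x * (y - x)) ^ 2 := by ring
    push_cast
    calc ((k : ℝ) + 1) ^ 2 = k ^ 2 + 2 * k + 1 := by ring
      _ ≤ C * y * x ^ 2 + 2 * (C * y * x * (y - x)) + C * y * (y - x) ^ 2 := by gcongr
      _ = C * y ^ 3 := by ring

theorem summable_inv_pow_three_of_gap (hδ_pos : ∀ k, 0 < δ k) (hδ_mono : StrictMono δ)
    (hC : 0 ≤ C) (hgap : ∀ k, 1 ≤ C * δ (k + 1) * (δ (k + 1) - δ k) ^ 2) :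
    Summable fun k => (δ k ^ 3)⁻¹ := by
  rw [← summable_nat_add_iff 1]
  refine Summable.of_nonneg_of_le (fun k => by have := hδ_pos (k + 1); positivity) (fun k => ?_)
    (((summable_nat_add_iff 1).2 (Real.summable_nat_pow_inv.2 one_lt_two)).mul_left C)
  rw [← div_eq_mul_inv, inv_le_iff_one_le_mul₀ (pow_pos (hδ_pos (k + 1)) 3), div_mul_eq_mul_div,
    one_le_div (by positivity)]
  exact sq_le_mul_pow_three_of_gap hδ_pos hδ_mono hC hgap (k + 1)

end GapSequence

theorem summable_inv_pow_three_of_airy {u u' : ℝ → ℝ} (hu : ∀ h, HasDerivAt u (u' h) h)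
    (hu' : ∀ h, HasDerivAt u' (2 * h * u h) h) (hu_ne : u ≠ 0) {δ : ℕ → ℝ}
    (hδ_pos : ∀ k, 0 < δ k) (hδ_mono : StrictMono δ) (hδ_zero : ∀ k, u' (-δ k) = 0) :
    Summable fun k => (δ k ^ 3)⁻¹ :=
  summable_inv_pow_three_of_gap hδ_pos hδ_mono zero_le_two fun k =>
    one_le_mul_sub_sq_of_airy hu hu' hu_ne (hδ_pos k) (hδ_mono k.lt_succ_self) (hδ_zero k)
      (hδ_zero (k + 1))

theorem stmt17_general {α : ℝ} (hα : 0 < α) (hα' : α < 1) {u u' : ℝ → ℝ}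
    (hu : ∀ h, HasDerivAt u (u' h) h) (hu' : ∀ h, HasDerivAt u' (2 * h * u h) h) (hu_ne : u ≠ 0)
    {δ : ℕ → ℝ} (hδ_pos : ∀ k, 0 < δ k) (hδ_mono : StrictMono δ) (hδ_zero : ∀ k, u' (-δ k) = 0)
    {p : ℕ → ℝ} {A : ℝ} (hp : ∀ k, p k = A * (δ k ^ 4)⁻¹) :
    (∀ x : ℝ, Summable fun k => p k * (δ k / 2) * mittagLefflerDensity α (δ k * |x|)) ∧
    (∀ x : ℝ, Summable fun k => p k * (δ k / 2) * Real.exp (-δ k * |x|)) ∧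
    ∀ x : ℝ, ∫ t in Ioi (0 : ℝ), Real.exp (-t) * t ^ (-α) *
        ∑' k, p k * (δ k / 2) * mittagLefflerDensity α (δ k * |t ^ (-α) * x|) =
      ∑' k, p k * (δ k / 2) * Real.exp (-δ k * |x|) := by
  have hweight : Summable fun k => p k * (δ k / 2) := by
    refine ((summable_inv_pow_three_of_airy hu hu' hu_ne hδ_pos hδ_mono hδ_zero).mul_left
      (A / 2)).congr fun k => ?_
    have := (hδ_pos k).ne'
    rw [hp]
    field_simp
  have hnonneg : ∀ (x : ℝ) k, 0 ≤ δ k * |x| := fun x k =>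
    mul_nonneg (hδ_pos k).le (abs_nonneg x)
  refine ⟨fun x => summable_mul_mittagLefflerDensity hα hα' hweight (hnonneg x), fun x => ?_,
    fun x => ?_⟩
  · simpa only [neg_mul] using summable_mul_exp_neg hweight (hnonneg x)
  · simp_rw [neg_mul (δ _)]
    rw [← integral_tsum_mul_mittagLefflerDensity hα hα' hweight (hnonneg x)]
    refine setIntegral_congr_fun measurableSet_Ioi fun t (ht : 0 < t) => ?_
    simp_rw [abs_mul, abs_of_pos (Real.rpow_pos_of_pos ht (-α)), mul_left_comm (δ _)]

/-- the series `ν₁(x) = ∑ₖ pₖ·(δₖ/2)·f_{2/3}(δₖ|x|)` and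
`ν̂₁(x) = ∑ₖ pₖ·(δₖ/2)·e^{-δₖ|x|}` converge, and the exponential-time mixture of `ν₁`
equals `ν̂₁`.  Here `δ k` stands for `δ'_{k+1}`, the zeros of `h ↦ u'(-h)` on `(0,∞)`,
and `pₖ = (u'(0)²/2)·δₖ⁻⁴`. -/
theorem stmt17
    (u : ℝ → ℝ) (hu_smooth : ContDiff ℝ 2 u)
    (hu_ode : ∀ h : ℝ, deriv (deriv u) h = 2 * h * u h)
    (hu_zero : u 0 = 1)
    (hu'_zero : deriv u 0 = -((6:ℝ) ^ ((1:ℝ)/3) * Real.Gamma (2/3) / Real.Gamma (1/3)))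
    (hu_pos : ∀ h : ℝ, 0 ≤ h → 0 < u h)
    (hu_anti : StrictAntiOn u (Ici 0))
    (hu_lim : Tendsto u atTop (𝓝 0))
    (δ : ℕ → ℝ) (hδ_pos : ∀ k, 0 < δ k) (hδ_mono : StrictMono δ)
    (hδ_zero : ∀ k, deriv u (-(δ k)) = 0)
    (hδ_all : ∀ x : ℝ, 0 < x → deriv u (-x) = 0 → ∃ k, δ k = x)
    (p : ℕ → ℝ) (hp : ∀ k, p k = (deriv u 0) ^ 2 / 2 * ((δ k) ^ 4)⁻¹) :
    (∀ x : ℝ, Summable (fun k : ℕ => p k * (δ k / 2) * mittagLeffler23 (δ k * |x|))) ∧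
    (∀ x : ℝ, Summable (fun k : ℕ => p k * (δ k / 2) * Real.exp (-(δ k) * |x|))) ∧
    (∀ x : ℝ,
      (∫ t in Ioi (0:ℝ), Real.exp (-t) * t ^ (-(2:ℝ)/3) *
        ∑' k : ℕ, p k * (δ k / 2) * mittagLeffler23 (δ k * |t ^ (-(2:ℝ)/3) * x|)) =
      ∑' k : ℕ, p k * (δ k / 2) * Real.exp (-(δ k) * |x|)) := by
  have hu_diff := hu_smooth.differentiable two_ne_zero
  have hu'_diff := hu_smooth.differentiable_deriv_two
  have hu_ne : u ≠ 0 := fun h => one_ne_zero (hu_zero.symm.trans (congrFun h 0))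
  simpa only [neg_div, mittagLeffler23_eq_mittagLefflerDensity] using
    stmt17_general (α := 2 / 3) (by norm_num) (by norm_num) (fun h => (hu_diff h).hasDerivAt)
      (fun h => hu_ode h ▸ (hu'_diff h).hasDerivAt) hu_ne hδ_pos hδ_mono hδ_zero hp
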